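/- For the maximum loss $M^{H,-}_a = \sup_{0\le u\le v\le a}(B^H_u - B^H_v)$ of fractional Brownian motion with $H \in [1/2,1)$, the expected value satisfies $\frac{\sqrt{2}\,a^H}{2\sqrt{\pi}} \le E[M^{H,-}_a] \le \frac{2\sqrt{2}\,a^H}{\sqrt{\pi}}$. -/

import Mathlib

open MeasureTheory ProbabilityTheory Real Set Filter

/-- A (standard) fractional Brownian motion with Hurst parameter `H`:
a continuous centered Gaussian process started at `0` with the fBm covariance. -/
structure IsFBM {Ω : Type*} [MeasurableSpace Ω] (P : Measure Ω) (H : ℝ)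
    (B : ℝ → Ω → ℝ) : Prop where
  measurable : ∀ t, Measurable (B t)
  gaussian : ∀ (n : ℕ) (t : Fin n → ℝ) (c : Fin n → ℝ),
    ∃ v : NNReal, P.map (fun ω => ∑ i, c i * B (t i) ω) = gaussianReal 0 v
  zero : ∀ ω, B 0 ω = 0
  cov : ∀ s t : ℝ, 0 ≤ s → 0 ≤ t →
    ∫ ω, B s ω * B t ω ∂P = (s ^ (2*H) + t ^ (2*H) - |t - s| ^ (2*H)) / 2
  cont : ∀ ω, Continuous fun t => B t ω

/-- Running supremum `S_a = sup_{0 ≤ v ≤ a} B_v`. -/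
noncomputable def fbmSup {Ω : Type*} (B : ℝ → Ω → ℝ) (a : ℝ) (ω : Ω) : ℝ :=
  sSup ((fun v => B v ω) '' Set.Icc 0 a)

/-- Running infimum `I_a = inf_{0 ≤ v ≤ a} B_v`. -/
noncomputable def fbmInf {Ω : Type*} (B : ℝ → Ω → ℝ) (a : ℝ) (ω : Ω) : ℝ :=
  sInf ((fun v => B v ω) '' Set.Icc 0 a)

/-- Maximum loss `M_a = sup_{0 ≤ u ≤ v ≤ a} (B_u - B_v)`. -/
noncomputable def fbmMaxLoss {Ω : Type*} (B : ℝ → Ω → ℝ) (a : ℝ) (ω : Ω) : ℝ :=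
  sSup {x | ∃ u v : ℝ, 0 ≤ u ∧ u ≤ v ∧ v ≤ a ∧ x = B u ω - B v ω}

/-!
Let `S` be the running maximum and `M` the maximum loss of a sequence `B`, and
put `μ = max M d` for a level `d > 0`. Summation by parts gives the pathwise inequality
`d * (M - d) ≤ (B_n - B_0) ^ 2 / 2 + ∑ (B_{i+1} - B_i) * F_i`, where `F = μ - d - (S - B_0)` is a
nonincreasing function of the increments up to time `i`. For a Gaussian process, the past is the sum
of a multiple of the next increment `Z` and a residual independent of `Z`. When increments are
nonnegatively correlated, that multiple has nondecreasing coefficients, so replacing the past by the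
residual can only increase `Z * F_i`, and the expectation becomes `E[Z] * E[F_i] = 0`. Hence
`E[M] ≤ d + Var(B_n - B_0) / (2 * d)`; optimising `d` and refining the time grid (Fatou) yields
`E[M] ≤ √2 * σ` with `σ ^ 2 = Var(B_a - B_0)`. The lower bound is `M ≥ max (B_0 - B_a) 0`. For
fractional Brownian motion, `σ = a ^ H`, and increments are nonnegatively correlated for `H ≥ 1/2`
because `x ↦ x ^ (2 * H)` is convex.
-/

section DiscreteMaxLoss

/-- The drawdown of a sequence: the gap between its running maximum and its current value. -/
noncomputable def drawdown (b : ℕ → ℝ) (n : ℕ) : ℝ := partialSups b n - b n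

/-- The maximum loss `max_{i ≤ j ≤ n} (b i - b j)` of a sequence up to time `n`, encoded as the
running maximum of its drawdown. -/
noncomputable def seqMaxLoss (b : ℕ → ℝ) (n : ℕ) : ℝ := partialSups (drawdown b) n

/-- The weight put on the increment `b (n + 1) - b n` in `mul_seqMaxLoss_sub_le`: the excess of the
maximum loss over the level `d`, minus the rise of the running maximum. -/
noncomputable def lossWeight (d : ℝ) (b : ℕ → ℝ) (n : ℕ) : ℝ :=
  max (seqMaxLoss b n) d - d - (partialSups b n - b 0)

theorem seqMaxLoss_le_iff {b : ℕ → ℝ} {n : ℕ} {x : ℝ} :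
    seqMaxLoss b n ≤ x ↔ ∀ i j, i ≤ j → j ≤ n → b i - b j ≤ x := by
  simp only [seqMaxLoss, drawdown, partialSups_le_iff, sub_le_iff_le_add]
  exact ⟨fun h i j hij hj => h j hj i hij, fun h j hj i hij => h i j hij hj⟩

theorem sub_le_seqMaxLoss (b : ℕ → ℝ) {i j n : ℕ} (hij : i ≤ j) (hj : j ≤ n) :
    b i - b j ≤ seqMaxLoss b n :=
  seqMaxLoss_le_iff.1 le_rfl i j hij hj

theorem seqMaxLoss_nonneg (b : ℕ → ℝ) (n : ℕ) : 0 ≤ seqMaxLoss b n := by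
  simpa using sub_le_seqMaxLoss b le_rfl (Nat.zero_le n)

theorem drawdown_succ (b : ℕ → ℝ) (n : ℕ) :
    drawdown b (n + 1) = max (drawdown b n - (b (n + 1) - b n)) 0 := by
  rw [drawdown, drawdown, partialSups_add_one, ← sub_self (b (n + 1)), ← max_sub_sub_right]
  congr 1
  ring

theorem seqMaxLoss_succ (b : ℕ → ℝ) (n : ℕ) :
    seqMaxLoss b (n + 1) = max (seqMaxLoss b n) (drawdown b (n + 1)) :=
  partialSups_add_one _ _

theorem lossWeight_le_of_monotoneOn_sub {b b' : ℕ → ℝ} {n : ℕ}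
    (h : MonotoneOn (b' - b) (Iic n)) (d : ℝ) : lossWeight d b' n ≤ lossWeight d b n := by
  have increment_le {i j : ℕ} (hij : i ≤ j) (hj : j ≤ n) : b j - b i ≤ b' j - b' i := by
    have := h (mem_Iic.2 (hij.trans hj)) (mem_Iic.2 hj) hij
    simp only [Pi.sub_apply] at this
    linarith
  have rise_le : partialSups b n ≤ partialSups b' n - b' 0 + b 0 :=
    partialSups_le _ _ _ fun i hi => by
      linarith [increment_le (Nat.zero_le i) hi, le_partialSups_of_le b' hi]
  have loss_le : seqMaxLoss b' n ≤ seqMaxLoss b n := seqMaxLoss_le_iff.2 fun i j hij hj => by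
    linarith [increment_le hij hj, sub_le_seqMaxLoss b hij hj]
  unfold lossWeight
  linarith [max_le_max_right d loss_le]

theorem drawdown_sq_add_sum_le (b : ℕ → ℝ) (n : ℕ) :
    drawdown b n ^ 2 + 2 * ∑ i ∈ Finset.range n, (b (i + 1) - b i) * (partialSups b i - b 0) ≤
      (b n - b 0) ^ 2 := by
  induction n with
  | zero => simp [drawdown]
  | succ n ih =>
    have hsq : drawdown b (n + 1) ^ 2 ≤ (drawdown b n - (b (n + 1) - b n)) ^ 2 := by
      rw [drawdown_succ]
      rcases max_cases (drawdown b n - (b (n + 1) - b n)) 0 with ⟨h, -⟩ | ⟨h, -⟩ <;> rw [h]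
      simpa using sq_nonneg _
    rw [Finset.sum_range_succ]
    rw [show drawdown b n = partialSups b n - b n from rfl] at ih hsq
    linear_combination ih + hsq

theorem le_sum_mul_seqMaxLoss_sub (d : ℝ) (b : ℕ → ℝ) (n : ℕ) :
    (max (seqMaxLoss b n) d ^ 2 - d ^ 2) / 2 - (max (seqMaxLoss b n) d - d) * drawdown b n ≤
      ∑ i ∈ Finset.range n, (b (i + 1) - b i) * (max (seqMaxLoss b i) d - d) := by
  induction n with
  | zero =>
    have h0 : drawdown b 0 = 0 := by simp [drawdown]
    have hM : seqMaxLoss b 0 = 0 := by simp [seqMaxLoss, h0]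
    simp only [hM, h0, Finset.range_zero, Finset.sum_empty]
    rcases max_cases 0 d with ⟨h, -⟩ | ⟨h, -⟩ <;> rw [h] <;> nlinarith [sq_nonneg d]
  | succ n ih =>
    rw [Finset.sum_range_succ, seqMaxLoss_succ, max_right_comm]
    set m := max (seqMaxLoss b n) d
    have hd : d ≤ m := le_max_right _ _
    have hm : 0 ≤ m := (seqMaxLoss_nonneg b n).trans (le_max_left _ _)
    rcases le_or_gt (drawdown b (n + 1)) m with hD | hD
    · have hstep : drawdown b n - (b (n + 1) - b n) ≤ drawdown b (n + 1) :=
        (le_max_left _ _).trans_eq (drawdown_succ b n).symm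
      rw [max_eq_left hD]
      nlinarith [mul_le_mul_of_nonneg_left hstep (sub_nonneg.2 hd)]
    · have hstep : drawdown b (n + 1) = drawdown b n - (b (n + 1) - b n) := by
        rw [drawdown_succ] at hD ⊢
        exact max_eq_left ((lt_max_iff.1 (hm.trans_lt hD)).resolve_right (lt_irrefl 0)).le
      rw [max_eq_right hD.le]
      nlinarith [sq_nonneg (drawdown b (n + 1) - m)]

theorem mul_seqMaxLoss_sub_le (d : ℝ) (b : ℕ → ℝ) (n : ℕ) :
    d * (max (seqMaxLoss b n) d - d) ≤
      (b n - b 0) ^ 2 / 2 + ∑ i ∈ Finset.range n, (b (i + 1) - b i) * lossWeight d b i := by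
  have h₁ := drawdown_sq_add_sum_le b n
  have h₂ := le_sum_mul_seqMaxLoss_sub d b n
  simp only [lossWeight, mul_sub _ (_ - d) _, Finset.sum_sub_distrib]
  nlinarith [sq_nonneg (max (seqMaxLoss b n) d - d - drawdown b n)]

end DiscreteMaxLoss

section Integrability

variable {Ω : Type*} [MeasurableSpace Ω] {P : Measure Ω}

theorem measurable_partialSups (n : ℕ) : Measurable fun b : ℕ → ℝ => partialSups b n := by
  induction n with
  | zero => simpa only [partialSups_zero] using measurable_pi_apply 0
  | succ n ih =>
    simp only [partialSups_add_one]
    exact ih.max (measurable_pi_apply _)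

theorem measurable_seqMaxLoss (n : ℕ) : Measurable fun b : ℕ → ℝ => seqMaxLoss b n :=
  (measurable_partialSups n).comp
    (measurable_pi_lambda _ fun i => (measurable_partialSups i).sub (measurable_pi_apply i))

theorem measurable_lossWeight (d : ℝ) (n : ℕ) :
    Measurable fun b : ℕ → ℝ => lossWeight d b n :=
  (((measurable_seqMaxLoss n).max measurable_const).sub_const d).sub
    ((measurable_partialSups n).sub (measurable_pi_apply 0))

theorem memLp_partialSups {p : ENNReal} {X : ℕ → Ω → ℝ} (hX : ∀ i, MemLp (X i) p P) (n : ℕ) :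
    MemLp (fun ω => partialSups (X · ω) n) p P := by
  induction n with
  | zero => simpa only [partialSups_zero] using hX 0
  | succ n ih =>
    simp only [partialSups_add_one]
    exact ih.sup (hX (n + 1))

theorem memLp_seqMaxLoss {p : ENNReal} {X : ℕ → Ω → ℝ} (hX : ∀ i, MemLp (X i) p P) (n : ℕ) :
    MemLp (fun ω => seqMaxLoss (X · ω) n) p P :=
  memLp_partialSups (fun i => (memLp_partialSups hX i).sub (hX i)) n

theorem memLp_lossWeight [IsFiniteMeasure P] {p : ENNReal} {X : ℕ → Ω → ℝ}
    (hX : ∀ i, MemLp (X i) p P) (d : ℝ) (n : ℕ) :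
    MemLp (fun ω => lossWeight d (X · ω) n) p P :=
  (((memLp_seqMaxLoss hX n).sup (memLp_const d)).sub (memLp_const d)).sub
    ((memLp_partialSups hX n).sub (hX 0))

end Integrability

section IncrementCorrelation

variable {Ω : Type*} [MeasurableSpace Ω] {P : Measure Ω}

/-- On the index set `s`, any two consecutive increments of the process `X` are nonnegatively
correlated. This is the only property of the covariance of fractional Brownian motion with Hurst
parameter at least `1/2` that the upper bound needs. -/
def NonnegCorrelatedIncrementsOn {T : Type*} [Preorder T] (X : T → Ω → ℝ) (s : Set T)
    (P : Measure Ω) : Prop :=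
  ∀ ⦃p q r t : T⦄, p ∈ s → q ∈ s → r ∈ s → t ∈ s → p ≤ q → q ≤ r → r ≤ t →
    0 ≤ cov[X q - X p, X t - X r; P]

theorem NonnegCorrelatedIncrementsOn.comp {S T : Type*} [Preorder S] [Preorder T]
    {X : T → Ω → ℝ} {s : Set T} {s' : Set S} (hX : NonnegCorrelatedIncrementsOn X s P) {f : S → T}
    (hf : MonotoneOn f s') (hs : MapsTo f s' s) :
    NonnegCorrelatedIncrementsOn (fun i => X (f i)) s' P :=
  fun _ _ _ _ hp hq hr ht hpq hqr hrt =>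
    hX (hs hp) (hs hq) (hs hr) (hs ht) (hf hp hq hpq) (hf hq hr hqr) (hf hr ht hrt)

theorem integral_mul_nonpos_of_indepFun {Z G G₀ : Ω → ℝ} (hZ : MemLp Z 2 P) (hG : MemLp G 2 P)
    (hG₀ : MemLp G₀ 2 P) (hZ0 : P[Z] = 0) (hind : IndepFun Z G₀ P)
    (hle : ∀ ω, Z ω * G ω ≤ Z ω * G₀ ω) : ∫ ω, Z ω * G ω ∂P ≤ 0 := by
  calc ∫ ω, Z ω * G ω ∂P ≤ ∫ ω, Z ω * G₀ ω ∂P :=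
        integral_mono (hZ.integrable_mul hG) (hZ.integrable_mul hG₀) hle
    _ = 0 := by
        rw [hind.integral_fun_mul_eq_mul_integral hZ.1 hG₀.1, hZ0, zero_mul]

theorem covariance_eq_zero_of_variance_eq_zero [IsFiniteMeasure P] {X Y : Ω → ℝ}
    (hY : MemLp Y 2 P) (h : Var[Y; P] = 0) : cov[X, Y; P] = 0 := by
  rw [covariance, integral_eq_zero_of_ae]
  filter_upwards [ae_eq_integral_of_variance_eq_zero hY h] with ω hω
  simp [hω]

theorem covariance_sub_regression_eq_zero [IsFiniteMeasure P] {Y Z : Ω → ℝ} (hY : MemLp Y 2 P)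
    (hZ : MemLp Z 2 P) :
    cov[Z, fun ω => Y ω - cov[Y, Z; P] / Var[Z; P] * Z ω; P] = 0 := by
  by_cases hv : Var[Z; P] = 0
  · rw [covariance_comm]
    exact covariance_eq_zero_of_variance_eq_zero hZ hv
  · rw [covariance_fun_sub_right hZ hY (hZ.const_mul _), covariance_const_mul_right,
      covariance_self hZ.1.aemeasurable, div_mul_cancel₀ _ hv, covariance_comm, sub_self]

end IncrementCorrelation

section GaussianIncrements

variable {Ω : Type*} [MeasurableSpace Ω] {P : Measure Ω}

theorem indepFun_increment_residual {T : Type*} {X : T → Ω → ℝ}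
    (hX : IsGaussianProcess X P) (s t : T) (c : T → ℝ)
    (hc : ∀ i, cov[X t - X s, fun ω => X i ω - c i * (X t - X s) ω; P] = 0) :
    IndepFun (X t - X s) (fun ω i => X i ω - c i * (X t - X s) ω) P := by
  classical
  have hXm := hX.aemeasurable
  have hjoint : IsGaussianProcess
      (Sum.elim (fun _ : Unit => X t - X s) fun i ω => X i ω - c i * (X t - X s) ω) P := by
    refine hX.of_isGaussianProcess fun i => ?_
    rcases i with _ | i
    · exact ⟨{s, t}, .proj ⟨t, by simp⟩ - .proj ⟨s, by simp⟩, fun ω => by simp⟩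
    · exact ⟨{s, t, i}, .proj ⟨i, by simp⟩ - c i • (.proj ⟨t, by simp⟩ - .proj ⟨s, by simp⟩),
        fun ω => by simp⟩
  exact (hjoint.indepFun_of_covariance_eq_zero (fun _ => (hXm t).sub (hXm s))
    (fun i => (hXm i).sub (((hXm t).sub (hXm s)).const_mul (c i))) fun _ => hc).comp
    (measurable_pi_apply ()) measurable_id

theorem integral_increment_mul_lossWeight_nonpos {X : ℕ → Ω → ℝ} {n : ℕ}
    (hX : IsGaussianProcess X P) (hmean : ∀ i j, P[X i] = P[X j])
    (hcorr : NonnegCorrelatedIncrementsOn X (Iic (n + 1)) P) (d : ℝ) :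
    ∫ ω, (X (n + 1) ω - X n ω) * lossWeight d (X · ω) n ∂P ≤ 0 := by
  have := hX.isProbabilityMeasure
  have hL2 i : MemLp (X i) 2 P := (hX.hasGaussianLaw_eval i).memLp_two
  set Z := X (n + 1) - X n
  have hZL2 : MemLp Z 2 P := (hL2 _).sub (hL2 _)
  set c : ℕ → ℝ := fun i => cov[X i, Z; P] / Var[Z; P]
  set Y : ℕ → Ω → ℝ := fun i ω => X i ω - c i * Z ω with hY
  have hind : IndepFun Z (fun ω => lossWeight d (Y · ω) n) P :=
    (indepFun_increment_residual hX n (n + 1) c fun i =>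
      covariance_sub_regression_eq_zero (hL2 i) hZL2).comp measurable_id
      (measurable_lossWeight d n)
  have hc_mono : MonotoneOn c (Iic n) := fun i hi j hj hij => by
    have : 0 ≤ cov[X j - X i, Z; P] := hcorr (mem_Iic.2 (hi.trans n.le_succ))
      (mem_Iic.2 (hj.trans n.le_succ)) (mem_Iic.2 n.le_succ) (mem_Iic.2 le_rfl) hij hj n.le_succ
    rw [covariance_sub_left (hL2 _) (hL2 _) hZL2, sub_nonneg] at this
    exact div_le_div_of_nonneg_right this (variance_nonneg _ _)
  refine integral_mul_nonpos_of_indepFun hZL2 (memLp_lossWeight hL2 d n)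
    (memLp_lossWeight (fun i => (hL2 i).sub (hZL2.const_mul (c i))) d n) ?_ hind fun ω => ?_
  · rw [integral_sub ((hL2 _).integrable one_le_two) ((hL2 _).integrable one_le_two),
      hmean (n + 1) n, sub_self]
  · -- `X = Y + Z • c` with `c` nondecreasing, so the sign of `Z` decides which weight is larger.
    rcases le_total 0 (Z ω) with hpos | hneg
    · refine mul_le_mul_of_nonneg_left (lossWeight_le_of_monotoneOn_sub ?_ d) hpos
      intro i hi j hj hij
      simpa [hY] using mul_le_mul_of_nonneg_right (hc_mono hi hj hij) hpos
    · refine mul_le_mul_of_nonpos_left (lossWeight_le_of_monotoneOn_sub ?_ d) hneg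
      intro i hi j hj hij
      simpa [hY] using mul_le_mul_of_nonpos_right (hc_mono hi hj hij) hneg

theorem integrable_increment_mul_lossWeight [IsFiniteMeasure P] {X : ℕ → Ω → ℝ}
    (hX : ∀ i, MemLp (X i) 2 P) (d : ℝ) (i : ℕ) :
    Integrable (fun ω => (X (i + 1) ω - X i ω) * lossWeight d (X · ω) i) P :=
  ((hX _).sub (hX _)).integrable_mul (memLp_lossWeight hX d i)

theorem integral_sum_increment_mul_lossWeight_nonpos {X : ℕ → Ω → ℝ} {n : ℕ}
    (hX : IsGaussianProcess X P) (hmean : ∀ i j, P[X i] = P[X j])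
    (hcorr : NonnegCorrelatedIncrementsOn X (Iic n) P) (d : ℝ) :
    ∫ ω, ∑ i ∈ Finset.range n, (X (i + 1) ω - X i ω) * lossWeight d (X · ω) i ∂P ≤ 0 := by
  have := hX.isProbabilityMeasure
  rw [integral_finsetSum _ fun i _ =>
    integrable_increment_mul_lossWeight (fun j => (hX.hasGaussianLaw_eval j).memLp_two) d i]
  refine Finset.sum_nonpos fun i hi => ?_
  exact integral_increment_mul_lossWeight_nonpos hX hmean
    (hcorr.comp monotoneOn_id fun j hj => mem_Iic.2 (hj.trans (Finset.mem_range.1 hi))) d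

theorem integral_seqMaxLoss_le_add_div {X : ℕ → Ω → ℝ} {n : ℕ}
    (hX : IsGaussianProcess X P) (hmean : ∀ i j, P[X i] = P[X j])
    (hcorr : NonnegCorrelatedIncrementsOn X (Iic n) P) {d : ℝ} (hd : 0 < d) :
    ∫ ω, seqMaxLoss (X · ω) n ∂P ≤ d + Var[X n - X 0; P] / (2 * d) := by
  have := hX.isProbabilityMeasure
  have hL2 i : MemLp (X i) 2 P := (hX.hasGaussianLaw_eval i).memLp_two
  have hint i : Integrable (X i) P := (hL2 i).integrable one_le_two
  have hsum := integrable_finsetSum (Finset.range n) fun i _ =>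
    integrable_increment_mul_lossWeight hL2 d i
  have hvar : Var[X n - X 0; P] = ∫ ω, (X n ω - X 0 ω) ^ 2 ∂P := by
    rw [variance_of_integral_eq_zero ((hint n).sub (hint 0)).aemeasurable]
    · rfl
    · rw [integral_sub' (hint n) (hint 0), hmean n 0, sub_self]
  have hsq : Integrable (fun ω => (X n ω - X 0 ω) ^ 2 / 2) P :=
    ((hL2 n).sub (hL2 0)).integrable_sq.div_const 2
  have hM : Integrable (fun ω => seqMaxLoss (X · ω) n) P :=
    (memLp_seqMaxLoss hL2 n).integrable one_le_two
  have hexcess : d * (∫ ω, seqMaxLoss (X · ω) n ∂P - d) ≤ Var[X n - X 0; P] / 2 := by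
    calc d * (∫ ω, seqMaxLoss (X · ω) n ∂P - d)
        = ∫ ω, d * (seqMaxLoss (X · ω) n - d) ∂P := by
          rw [integral_const_mul, integral_sub hM (integrable_const d)]
          simp
      _ ≤ ∫ ω, ((X n ω - X 0 ω) ^ 2 / 2 +
            ∑ i ∈ Finset.range n, (X (i + 1) ω - X i ω) * lossWeight d (X · ω) i) ∂P :=
          integral_mono ((hM.sub (integrable_const d)).const_mul d) (hsq.add hsum) fun ω =>
            (mul_le_mul_of_nonneg_left (sub_le_sub_right (le_max_left _ d) d) hd.le).trans
              (mul_seqMaxLoss_sub_le d (X · ω) n)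
      _ ≤ Var[X n - X 0; P] / 2 := by
          rw [integral_add hsq hsum, integral_div, ← hvar]
          linarith [integral_sum_increment_mul_lossWeight_nonpos hX hmean hcorr d]
  rw [← sub_le_iff_le_add', ← div_div, le_div_iff₀' hd]
  exact hexcess

theorem integral_seqMaxLoss_le {X : ℕ → Ω → ℝ} {n : ℕ}
    (hX : IsGaussianProcess X P) (hmean : ∀ i j, P[X i] = P[X j])
    (hcorr : NonnegCorrelatedIncrementsOn X (Iic n) P) :
    ∫ ω, seqMaxLoss (X · ω) n ∂P ≤ √2 * √Var[X n - X 0; P] := by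
  obtain ⟨σ, hσdef⟩ : ∃ σ, σ = √Var[X n - X 0; P] := ⟨_, rfl⟩
  rw [← hσdef]
  have hvar : Var[X n - X 0; P] = σ ^ 2 := hσdef ▸ (sq_sqrt (variance_nonneg _ _)).symm
  have hbound {d : ℝ} (hd : 0 < d) : ∫ ω, seqMaxLoss (X · ω) n ∂P ≤ d + σ ^ 2 / (2 * d) :=
    hvar ▸ integral_seqMaxLoss_le_add_div hX hmean hcorr hd
  rcases (hσdef ▸ sqrt_nonneg _ : 0 ≤ σ).eq_or_lt with hσ | hσ
  · refine le_of_forall_pos_le_add fun d hd => ?_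
    simpa [← hσ] using hbound hd
  · calc ∫ ω, seqMaxLoss (X · ω) n ∂P ≤ σ / √2 + σ ^ 2 / (2 * (σ / √2)) := hbound (by positivity)
      _ = √2 * σ := by
        field_simp
        rw [sq_sqrt zero_le_two]
        ring

end GaussianIncrements

section Fatou

variable {Ω : Type*} [MeasurableSpace Ω] {P : Measure Ω}

theorem integrable_and_integral_le_of_tendsto {f : ℕ → Ω → ℝ} {g : Ω → ℝ} {C : ℝ}
    (hf : ∀ n, Integrable (f n) P) (hf0 : ∀ n ω, 0 ≤ f n ω) (hC : ∀ n, ∫ ω, f n ω ∂P ≤ C)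
    (hlim : ∀ᵐ ω ∂P, Tendsto (fun n => f n ω) atTop (nhds (g ω))) :
    Integrable g P ∧ ∫ ω, g ω ∂P ≤ C := by
  have hg : AEStronglyMeasurable g P :=
    aestronglyMeasurable_of_tendsto_ae _ (fun n => (hf n).1) hlim
  have hg0 : 0 ≤ᵐ[P] g := hlim.mono fun ω hω => ge_of_tendsto' hω fun n => hf0 n ω
  have hfatou : ∫⁻ ω, ENNReal.ofReal (g ω) ∂P ≤ ENNReal.ofReal C := by
    calc ∫⁻ ω, ENNReal.ofReal (g ω) ∂P
        = ∫⁻ ω, liminf (fun n => ENNReal.ofReal (f n ω)) atTop ∂P :=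
          lintegral_congr_ae <| hlim.mono fun ω hω => (ENNReal.tendsto_ofReal hω).liminf_eq.symm
      _ ≤ liminf (fun n => ∫⁻ ω, ENNReal.ofReal (f n ω) ∂P) atTop :=
          lintegral_liminf_le' fun n => (hf n).1.aemeasurable.ennreal_ofReal
      _ ≤ liminf (fun _ : ℕ => ENNReal.ofReal C) atTop :=
          liminf_le_liminf <| Eventually.of_forall fun n => by
            rw [← ofReal_integral_eq_lintegral_ofReal (hf n) (ae_of_all _ (hf0 n))]
            exact ENNReal.ofReal_le_ofReal (hC n)
      _ = ENNReal.ofReal C := liminf_const _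
  have hgint : Integrable g P :=
    ⟨hg, (hasFiniteIntegral_iff_ofReal hg0).2 (hfatou.trans_lt ENNReal.ofReal_lt_top)⟩
  refine ⟨hgint, ?_⟩
  rw [← ofReal_integral_eq_lintegral_ofReal hgint hg0] at hfatou
  exact (ENNReal.ofReal_le_ofReal_iff ((integral_nonneg (hf0 0)).trans (hC 0))).1 hfatou

end Fatou

section ContinuousMaxLoss

variable {Ω : Type*} {X : ℝ → Ω → ℝ} {a : ℝ} {ω : Ω}

theorem bddAbove_losses (hX : ContinuousOn (fun t => X t ω) (Icc 0 a)) :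
    BddAbove {x | ∃ u v : ℝ, 0 ≤ u ∧ u ≤ v ∧ v ≤ a ∧ x = X u ω - X v ω} := by
  obtain ⟨K, hK⟩ := isCompact_Icc.exists_bound_of_continuousOn hX
  refine ⟨K + K, ?_⟩
  rintro x ⟨u, v, hu, huv, hv, rfl⟩
  exact (le_abs_self _).trans <| (abs_sub _ _).trans <|
    add_le_add (hK u ⟨hu, huv.trans hv⟩) (hK v ⟨hu.trans huv, hv⟩)

theorem sub_le_fbmMaxLoss (hX : ContinuousOn (fun t => X t ω) (Icc 0 a)) {u v : ℝ} (hu : 0 ≤ u)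
    (huv : u ≤ v) (hv : v ≤ a) : X u ω - X v ω ≤ fbmMaxLoss X a ω :=
  le_csSup (bddAbove_losses hX) ⟨u, v, hu, huv, hv, rfl⟩

/-- The points `0, a / (n + 1), 2 * a / (n + 1), …`, the first `n + 2` of which divide `[0, a]` into
`n + 1` intervals of equal length. -/
noncomputable def uniformGrid (a : ℝ) (n i : ℕ) : ℝ := i * (a / (n + 1 : ℕ))

theorem uniformGrid_zero (a : ℝ) (n : ℕ) : uniformGrid a n 0 = 0 := by simp [uniformGrid]

theorem uniformGrid_last (a : ℝ) (n : ℕ) : uniformGrid a n (n + 1) = a :=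
  mul_div_cancel₀ a (Nat.cast_ne_zero.2 n.succ_ne_zero)

theorem monotone_uniformGrid (ha : 0 ≤ a) (n : ℕ) : Monotone (uniformGrid a n) :=
  fun _ _ hij => mul_le_mul_of_nonneg_right (Nat.cast_le.2 hij) (by positivity)

theorem mapsTo_uniformGrid (ha : 0 ≤ a) (n : ℕ) :
    MapsTo (uniformGrid a n) (Iic (n + 1)) (Icc 0 a) := fun i hi =>
  ⟨uniformGrid_zero a n ▸ monotone_uniformGrid ha n i.zero_le,
    (monotone_uniformGrid ha n hi).trans_eq (uniformGrid_last a n)⟩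

theorem floor_div_mul_mem_Iic (ha : 0 < a) {t : ℝ} (ht : t ≤ a) (n : ℕ) :
    ⌊t / a * (n + 1 : ℕ)⌋₊ ∈ Iic (n + 1) :=
  Nat.floor_le_of_le (mul_le_of_le_one_left (Nat.cast_nonneg _) ((div_le_one ha).2 ht))

theorem tendsto_uniformGrid_floor (ha : 0 < a) {t : ℝ} (ht : t ∈ Icc 0 a) :
    Tendsto (fun n => uniformGrid a n ⌊t / a * (n + 1 : ℕ)⌋₊) atTop (nhdsWithin t (Icc 0 a)) := by
  refine tendsto_nhdsWithin_iff.2 ⟨?_, Eventually.of_forall fun n =>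
    mapsTo_uniformGrid ha.le n (floor_div_mul_mem_Iic ha ht.2 n)⟩
  have hlim := (((tendsto_nat_floor_mul_div_atTop (div_nonneg ht.1 ha.le)).comp
    (tendsto_natCast_atTop_atTop.comp (tendsto_add_atTop_nat 1))).mul_const a)
  rw [div_mul_cancel₀ _ ha.ne'] at hlim
  exact hlim.congr fun n => div_mul_eq_mul_div₀ _ _ _ |>.trans (mul_div_assoc _ _ _)

theorem tendsto_seqMaxLoss_uniformGrid (ha : 0 < a)
    (hX : ContinuousOn (fun t => X t ω) (Icc 0 a)) :
    Tendsto (fun n => seqMaxLoss (fun i => X (uniformGrid a n i) ω) (n + 1)) atTop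
      (nhds (fbmMaxLoss X a ω)) := by
  refine tendsto_order.2 ⟨fun x hx => ?_, fun x hx => Eventually.of_forall fun n => ?_⟩
  · obtain ⟨_, ⟨u, v, hu, huv, hv, rfl⟩, hlt⟩ :=
      exists_lt_of_lt_csSup (by exact ⟨_, 0, 0, le_rfl, le_rfl, ha.le, rfl⟩) hx
    have approx {t : ℝ} (ht : t ∈ Icc 0 a) :
        Tendsto (fun n => X (uniformGrid a n ⌊t / a * (n + 1 : ℕ)⌋₊) ω) atTop (nhds (X t ω)) :=
      (hX t ht).tendsto.comp (tendsto_uniformGrid_floor ha ht)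
    filter_upwards [((approx ⟨hu, huv.trans hv⟩).sub
      (approx ⟨hu.trans huv, hv⟩)).eventually_const_lt hlt] with n hn
    exact hn.trans_le (sub_le_seqMaxLoss (fun i => X (uniformGrid a n i) ω)
      (Nat.floor_mono (by gcongr)) (floor_div_mul_mem_Iic ha hv n))
  · refine (seqMaxLoss_le_iff.2 fun i j hij hj => ?_).trans_lt hx
    exact sub_le_fbmMaxLoss hX (mapsTo_uniformGrid ha.le n (hij.trans hj)).1
      (monotone_uniformGrid ha.le n hij) (mapsTo_uniformGrid ha.le n hj).2

end ContinuousMaxLoss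

theorem integral_abs_gaussianReal (v : NNReal) :
    ∫ x, |x| ∂gaussianReal 0 v = √2 * √v / √π := by
  rcases eq_or_ne v 0 with rfl | hv
  · simp
  have hv' : (0 : ℝ) < v := NNReal.coe_pos.2 (pos_iff_ne_zero.2 hv)
  have hdensity (x : ℝ) : gaussianPDFReal 0 v x • |x| =
      (√(2 * π * v))⁻¹ * (|x| ^ (1 : ℝ) * rexp (-(1 / (2 * v)) * |x| ^ (2 : ℝ))) := by
    simp only [gaussianPDFReal, smul_eq_mul, rpow_one, rpow_two, sq_abs, sub_zero]
    rw [show -x ^ 2 / (2 * (v : ℝ)) = -(1 / (2 * v)) * x ^ 2 by ring]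
    ring
  rw [integral_gaussianReal_eq_integral_smul hv, integral_congr_ae (ae_of_all _ hdensity),
    integral_const_mul,
    integral_comp_abs (f := fun y => y ^ (1 : ℝ) * rexp (-(1 / (2 * v)) * y ^ (2 : ℝ))),
    integral_rpow_mul_exp_neg_mul_rpow two_pos (by norm_num) (by positivity)]
  rw [neg_div, show (1 + 1 : ℝ) / 2 = 1 by norm_num, Gamma_one, rpow_neg_one,
    sqrt_mul two_pi_pos.le, sqrt_mul zero_le_two]
  field_simp
  rw [sq_sqrt hv'.le, sq_sqrt zero_le_two, mul_comm]

section GaussianMaxLoss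

variable {Ω : Type*} [MeasurableSpace Ω] {P : Measure Ω}

theorem integral_abs_of_hasGaussianLaw {Z : Ω → ℝ} (hZ : HasGaussianLaw Z P) (hZ0 : P[Z] = 0) :
    ∫ ω, |Z ω| ∂P = √2 * √Var[Z; P] / √π := by
  rw [← integral_map (f := fun x => |x|) hZ.aemeasurable (by fun_prop), hZ.map_eq_gaussianReal, hZ0,
    integral_abs_gaussianReal, Real.coe_toNNReal _ (variance_nonneg _ _)]

variable {X : ℝ → Ω → ℝ} {a : ℝ}

theorem integrable_fbmMaxLoss_and_integral_le (ha : 0 < a) (hX : IsGaussianProcess X P)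
    (hmean : ∀ s t, P[X s] = P[X t])
    (hcont : ∀ᵐ ω ∂P, ContinuousOn (fun t => X t ω) (Icc 0 a))
    (hcorr : NonnegCorrelatedIncrementsOn X (Icc 0 a) P) :
    Integrable (fbmMaxLoss X a) P ∧
      ∫ ω, fbmMaxLoss X a ω ∂P ≤ √2 * √Var[X a - X 0; P] := by
  have := hX.isProbabilityMeasure
  refine integrable_and_integral_le_of_tendsto
    (f := fun n ω => seqMaxLoss (fun i => X (uniformGrid a n i) ω) (n + 1))
    (fun n => (memLp_seqMaxLoss (fun i => (hX.hasGaussianLaw_eval _).memLp_two) _).integrable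
      one_le_two)
    (fun n ω => seqMaxLoss_nonneg _ _) (fun n => ?_)
    (hcont.mono fun ω hω => tendsto_seqMaxLoss_uniformGrid ha hω)
  have hgrid := integral_seqMaxLoss_le (hX.comp_right (uniformGrid a n)) (fun i j => hmean _ _)
    (hcorr.comp ((monotone_uniformGrid ha.le n).monotoneOn _) (mapsTo_uniformGrid ha.le n))
  simpa only [Function.comp_apply, uniformGrid_zero, uniformGrid_last] using hgrid

theorem le_integral_fbmMaxLoss (ha : 0 ≤ a) (hX : IsGaussianProcess X P)
    (hmean : ∀ s t, P[X s] = P[X t])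
    (hcont : ∀ᵐ ω ∂P, ContinuousOn (fun t => X t ω) (Icc 0 a))
    (hint : Integrable (fbmMaxLoss X a) P) :
    √2 * √Var[X a - X 0; P] / (2 * √π) ≤ ∫ ω, fbmMaxLoss X a ω ∂P := by
  have := hX.isProbabilityMeasure
  set Z := X a - X 0 with hZ
  have hZlaw : HasGaussianLaw Z P := hX.hasGaussianLaw_sub
  have hZ0 : P[Z] = 0 := by
    rw [integral_sub' (hX.hasGaussianLaw_eval a).integrable (hX.hasGaussianLaw_eval 0).integrable,
      hmean a 0, sub_self]
  calc √2 * √Var[Z; P] / (2 * √π) = ∫ ω, (|Z ω| - Z ω) / 2 ∂P := by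
        rw [integral_div, integral_sub hZlaw.integrable.abs hZlaw.integrable, hZ0,
          integral_abs_of_hasGaussianLaw hZlaw hZ0]
        field_simp
        ring
    _ ≤ ∫ ω, fbmMaxLoss X a ω ∂P := by
        refine integral_mono_ae ((hZlaw.integrable.abs.sub hZlaw.integrable).div_const 2) hint ?_
        filter_upwards [hcont] with ω hω
        have hstay : X 0 ω - X 0 ω ≤ fbmMaxLoss X a ω := sub_le_fbmMaxLoss hω le_rfl le_rfl ha
        have hfall : X 0 ω - X a ω ≤ fbmMaxLoss X a ω := sub_le_fbmMaxLoss hω le_rfl ha le_rfl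
        simp only [hZ, Pi.sub_apply]
        rcases abs_cases (X a ω - X 0 ω) with ⟨h, -⟩ | ⟨h, -⟩ <;> rw [h] <;> linarith

theorem expected_maxLoss_bounds_general (ha : 0 < a) (hX : IsGaussianProcess X P)
    (hmean : ∀ s t, P[X s] = P[X t])
    (hcont : ∀ᵐ ω ∂P, ContinuousOn (fun t => X t ω) (Icc 0 a))
    (hcorr : NonnegCorrelatedIncrementsOn X (Icc 0 a) P) :
    Integrable (fbmMaxLoss X a) P ∧
      √2 * √Var[X a - X 0; P] / (2 * √π) ≤ ∫ ω, fbmMaxLoss X a ω ∂P ∧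
      ∫ ω, fbmMaxLoss X a ω ∂P ≤ √2 * √Var[X a - X 0; P] := by
  obtain ⟨hint, hle⟩ := integrable_fbmMaxLoss_and_integral_le ha hX hmean hcont hcorr
  exact ⟨hint, le_integral_fbmMaxLoss ha.le hX hmean hcont hint, hle⟩

end GaussianMaxLoss

theorem map_add_map_le_of_convexOn {f : ℝ → ℝ} {s : Set ℝ} (hf : ConvexOn ℝ s f) {x y z w : ℝ}
    (hx : x ∈ s) (hw : w ∈ s) (hy : y ∈ Icc x w) (h : y + z = x + w) : f y + f z ≤ f x + f w := by
  obtain ⟨p, q, hp, hq, hpq, rfl⟩ := Icc_subset_segment hy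
  have hz : z = q • x + p • w := by
    simp only [smul_eq_mul] at h ⊢
    linear_combination h - (x + w) * hpq
  have hfy := hf.2 hx hw hp hq hpq
  have hfz := hf.2 hx hw hq hp (by rwa [add_comm])
  rw [hz]
  simp only [smul_eq_mul] at hfy hfz ⊢
  linear_combination hfy + hfz + (f x + f w) * hpq

namespace IsFBM

variable {Ω : Type*} [MeasurableSpace Ω] {P : Measure Ω} {H : ℝ} {B : ℝ → Ω → ℝ}

theorem isGaussianProcess (hB : IsFBM P H B) : IsGaussianProcess B P where
  hasGaussianLaw I := by
    have hmeas : Measurable fun ω => I.restrict (B · ω) :=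
      measurable_pi_lambda _ fun i => hB.measurable i
    refine ⟨isGaussian_of_map_eq_gaussianReal fun L => ?_⟩
    set e : Fin I.card ≃ I := I.equivFin.symm
    obtain ⟨v, hv⟩ := hB.gaussian I.card (fun k => e k) fun k => L fun j => if e k = j then 1 else 0
    refine ⟨0, v, ?_⟩
    rw [Measure.map_map L.measurable hmeas, ← hv]
    congr 1 with ω
    calc L (I.restrict (B · ω)) = ∑ i : I, B i ω • L fun j => if i = j then 1 else 0 :=
          (L : (I → ℝ) →ₗ[ℝ] ℝ).pi_apply_eq_sum_univ _
      _ = ∑ k, (L fun j => if e k = j then 1 else 0) * B (e k) ω := by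
          rw [← e.sum_comp]
          simp only [smul_eq_mul, mul_comm]

theorem memLp_two (hB : IsFBM P H B) (t : ℝ) : MemLp (B t) 2 P :=
  (hB.isGaussianProcess.hasGaussianLaw_eval t).memLp_two

theorem integral_eq_zero (hB : IsFBM P H B) (t : ℝ) : P[B t] = 0 := by
  obtain ⟨v, hv⟩ := hB.gaussian 1 (fun _ => t) fun _ => 1
  simp only [Finset.univ_unique, Finset.sum_const, Finset.card_singleton, one_smul, one_mul] at hv
  calc ∫ ω, B t ω ∂P = ∫ x, x ∂P.map (fun ω => B t ω) :=
        (integral_map (hB.measurable t).aemeasurable aestronglyMeasurable_id).symm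
    _ = 0 := hv ▸ integral_id_gaussianReal

theorem covariance_eq [IsProbabilityMeasure P] (hB : IsFBM P H B) {s t : ℝ} (hs : 0 ≤ s)
    (ht : 0 ≤ t) :
    cov[B s, B t; P] = (s ^ (2 * H) + t ^ (2 * H) - |t - s| ^ (2 * H)) / 2 := by
  rw [covariance_eq_sub (hB.memLp_two s) (hB.memLp_two t), hB.integral_eq_zero, zero_mul, sub_zero,
    ← hB.cov s t hs ht]
  rfl

theorem covariance_increments [IsProbabilityMeasure P] (hB : IsFBM P H B) {p q r t : ℝ}
    (hp : 0 ≤ p) (hq : 0 ≤ q) (hr : 0 ≤ r) (ht : 0 ≤ t) :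
    cov[B q - B p, B t - B r; P] = (|t - p| ^ (2 * H) + |r - q| ^ (2 * H)
      - |t - q| ^ (2 * H) - |r - p| ^ (2 * H)) / 2 := by
  have hL2 := hB.memLp_two
  rw [covariance_sub_left (hL2 q) (hL2 p) ((hL2 t).sub (hL2 r)),
    covariance_sub_right (hL2 q) (hL2 t) (hL2 r), covariance_sub_right (hL2 p) (hL2 t) (hL2 r),
    hB.covariance_eq hq ht, hB.covariance_eq hq hr, hB.covariance_eq hp ht, hB.covariance_eq hp hr]
  ring

theorem variance_increment [IsProbabilityMeasure P] (hB : IsFBM P H B) (hH : H ≠ 0) {s t : ℝ}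
    (hs : 0 ≤ s) (ht : 0 ≤ t) : Var[B t - B s; P] = |t - s| ^ (2 * H) := by
  rw [← covariance_self ((hB.measurable t).sub (hB.measurable s)).aemeasurable,
    hB.covariance_increments hs ht hs ht, sub_self, sub_self, abs_zero,
    zero_rpow (mul_ne_zero two_ne_zero hH), abs_sub_comm s t]
  ring

theorem nonnegCorrelatedIncrementsOn [IsProbabilityMeasure P] (hB : IsFBM P H B)
    (hH : 1 / 2 ≤ H) : NonnegCorrelatedIncrementsOn B (Ici 0) P := by
  intro p q r t hp hq hr ht hpq hqr hrt
  rw [hB.covariance_increments hp hq hr ht, abs_of_nonneg (by linarith),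
    abs_of_nonneg (by linarith), abs_of_nonneg (by linarith), abs_of_nonneg (by linarith)]
  have hconv : ConvexOn ℝ (Ici 0) fun x : ℝ => x ^ (2 * H) := convexOn_rpow (by linarith)
  have := map_add_map_le_of_convexOn hconv (x := r - q) (y := t - q) (z := r - p) (w := t - p)
    (sub_nonneg.2 hqr) (sub_nonneg.2 (hpq.trans (hqr.trans hrt)))
    ⟨by linarith, by linarith⟩ (by ring)
  linarith

end IsFBM

theorem expected_maxLoss_bounds {Ω : Type*} [MeasurableSpace Ω] (P : Measure Ω)
    [IsProbabilityMeasure P] (H a : ℝ) (B : ℝ → Ω → ℝ)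
    (hH : H ∈ Set.Ico (1/2 : ℝ) 1) (ha : 0 < a) (hB : IsFBM P H B) :
    Real.sqrt 2 * a ^ H / (2 * Real.sqrt π) ≤ ∫ ω, fbmMaxLoss B a ω ∂P ∧
      ∫ ω, fbmMaxLoss B a ω ∂P ≤ 2 * Real.sqrt 2 * a ^ H / Real.sqrt π := by
  have hσ : √Var[B a - B 0; P] = a ^ H := by
    rw [hB.variance_increment (by linarith [hH.1]) le_rfl ha.le, sub_zero, abs_of_pos ha, mul_comm,
      rpow_mul ha.le, rpow_two, sqrt_sq (by positivity)]
  obtain ⟨-, hlower, hupper⟩ := expected_maxLoss_bounds_general ha hB.isGaussianProcess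
    (fun s t => by rw [hB.integral_eq_zero, hB.integral_eq_zero])
    (ae_of_all _ fun ω => (hB.cont ω).continuousOn)
    ((hB.nonnegCorrelatedIncrementsOn hH.1).comp monotoneOn_id Icc_subset_Ici_self)
  rw [hσ] at hlower hupper
  have hpi : √π ≤ 2 := (sqrt_le_left two_pos.le).2 (by linarith [pi_le_four])
  refine ⟨hlower, hupper.trans ?_⟩
  rw [le_div_iff₀ (by positivity)]
  nlinarith [show 0 ≤ √2 * a ^ H by positivity]
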